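/- arXiv:2407.15235 — 2 statements merged into one kernel-verified Lean document; each statement's English description precedes it below -/
import Mathlib

section
/- Let V be a finite set, γ ∈ (0,1], and let F be a set function on subsets of V with F(∅) = 0 that is monotone non-decreasing and satisfies ∑_{j∈T} (F(S∪{j}) − F(S)) ≥ γ·(F(S∪T) − F(S)) for all disjoint S, T ⊆ V. Let S* ⊆ V with |S*| = k ≥ 1, and let S_0 = ∅, S_{t+1} = S_t ∪ {j_t} where j_t ∈ V maximizes F(S_t ∪ {j}) − F(S_t) over j ∈ V. Then for every t ≥ 0, F(S*) − F(S_t) ≤ F(S*)·(1 − γ/k)^t ≤ F(S*)·e^{−γ t / k}. -/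
open scoped BigOperators

/-!
Summing the weak submodularity inequality over `A \ S`, and bounding each of its at most `k`
marginal gains by the greedy one, shows that a greedy step recovers at least the fraction `γ / k`
of the gap `F A - F S`. The gap therefore contracts by the factor `1 - γ / k ≤ exp (-(γ / k))`.
-/

section GreedyStep

variable {V R : Type*} [DecidableEq V] [Ring R] [PartialOrder R]

/-- `γ`-weak submodularity: the marginal gains of the elements of `T` over a disjoint set `S` add
up to at least `γ` times the gain of adding `T` at once. Submodular functions have `γ = 1`. -/
def IsWeaklySubmodular (γ : R) (F : Finset V → R) : Prop :=
  ∀ S T : Finset V, Disjoint S T → γ * (F (S ∪ T) - F S) ≤ ∑ j ∈ T, (F (S ∪ {j}) - F S)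

/-- `S'` arises from `S` by one step of greedy maximization of `F`: adding an element of largest
marginal gain. That element may already lie in `S`, in which case `S' = S`. -/
def IsGreedyStep (F : Finset V → R) (S S' : Finset V) : Prop :=
  ∃ j : V, S' = S ∪ {j} ∧ ∀ j' : V, F (S ∪ {j'}) - F S ≤ F (S ∪ {j}) - F S

variable {γ : R} {F : Finset V → R} {S S' : Finset V}

lemma IsGreedyStep.subset (h : IsGreedyStep F S S') : S ⊆ S' := by
  obtain ⟨j, rfl, -⟩ := h
  exact Finset.subset_union_left

variable [IsOrderedRing R]

lemma IsGreedyStep.sum_gain_le_card_mul (h : IsGreedyStep F S S') (T : Finset V) :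
    ∑ j ∈ T, (F (S ∪ {j}) - F S) ≤ T.card * (F S' - F S) := by
  obtain ⟨i, rfl, hmax⟩ := h
  simpa only [nsmul_eq_mul] using T.sum_le_card_nsmul _ _ fun j _ ↦ hmax j

lemma IsWeaklySubmodular.mul_gap_le_sum_sdiff (hF : IsWeaklySubmodular γ F) (hmono : Monotone F)
    (hγ : 0 ≤ γ) (S A : Finset V) :
    γ * (F A - F S) ≤ ∑ j ∈ A \ S, (F (S ∪ {j}) - F S) := by
  have hA : F A ≤ F (S ∪ A \ S) := by
    rw [Finset.union_sdiff_self_eq_union]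
    exact hmono Finset.subset_union_right
  calc γ * (F A - F S) ≤ γ * (F (S ∪ A \ S) - F S) := by gcongr
    _ ≤ ∑ j ∈ A \ S, (F (S ∪ {j}) - F S) := hF S (A \ S) Finset.disjoint_sdiff

lemma IsGreedyStep.mul_gap_le_mul_gain (h : IsGreedyStep F S S') (hF : IsWeaklySubmodular γ F)
    (hmono : Monotone F) (hγ : 0 ≤ γ) {A : Finset V} {k : ℕ} (hA : A.card ≤ k) :
    γ * (F A - F S) ≤ k * (F S' - F S) := by
  have hgain : 0 ≤ F S' - F S := sub_nonneg.2 (hmono h.subset)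
  have hcard : (A \ S).card ≤ k := (Finset.card_le_card Finset.sdiff_subset).trans hA
  calc γ * (F A - F S) ≤ ∑ j ∈ A \ S, (F (S ∪ {j}) - F S) := hF.mul_gap_le_sum_sdiff hmono hγ S A
    _ ≤ (A \ S).card * (F S' - F S) := h.sum_gain_le_card_mul _
    _ ≤ k * (F S' - F S) := by gcongr

end GreedyStep

lemma IsGreedyStep.gap_le_one_sub_div_mul_gap {V K : Type*} [DecidableEq V] [Field K]
    [LinearOrder K] [IsStrictOrderedRing K] {γ : K} {F : Finset V → K} {S S' A : Finset V}
    (h : IsGreedyStep F S S') (hF : IsWeaklySubmodular γ F) (hmono : Monotone F) (hγ : 0 ≤ γ)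
    {k : ℕ} (hk : 0 < k) (hA : A.card ≤ k) :
    F A - F S' ≤ (1 - γ / k) * (F A - F S) := by
  have hgain : γ / k * (F A - F S) ≤ F S' - F S := by
    rw [div_mul_eq_mul_div, div_le_iff₀' (Nat.cast_pos.2 hk)]
    exact h.mul_gap_le_mul_gain hF hmono hγ hA
  linarith

lemma one_sub_pow_le_exp_neg_mul {x : ℝ} (hx : x ≤ 1) (n : ℕ) :
    (1 - x) ^ n ≤ Real.exp (-(n * x)) := by
  calc (1 - x) ^ n ≤ Real.exp (-x) ^ n :=
        pow_le_pow_left₀ (sub_nonneg.2 hx) (Real.one_sub_le_exp_neg x) n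
    _ = Real.exp (-(n * x)) := by rw [← Real.exp_nat_mul, mul_neg]

theorem greedy_exponential_decay_general {V : Type*} [DecidableEq V] {γ : ℝ} {F : Finset V → ℝ}
    (hF : IsWeaklySubmodular γ F) (hmono : Monotone F) {k : ℕ} (hk : 0 < k) (hγ : 0 ≤ γ)
    (hγk : γ ≤ k) {A : Finset V} (hA : A.card ≤ k) {S : ℕ → Finset V}
    (hS : ∀ t, IsGreedyStep F (S t) (S (t + 1))) (hS0 : F (S 0) ≤ F A) (t : ℕ) :
    F A - F (S t) ≤ (F A - F (S 0)) * (1 - γ / k) ^ t ∧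
      (F A - F (S 0)) * (1 - γ / k) ^ t ≤ (F A - F (S 0)) * Real.exp (-(γ * t) / k) := by
  have hratio : γ / k ≤ 1 := (div_le_one (Nat.cast_pos.2 hk)).2 hγk
  constructor
  · rw [mul_comm]
    exact le_geom (u := fun s ↦ F A - F (S s)) (sub_nonneg.2 hratio) t fun s _ ↦
      (hS s).gap_le_one_sub_div_mul_gap hF hmono hγ hk hA
  · have hexponent : -(γ * t) / k = -(t * (γ / k)) := by ring
    rw [hexponent]
    exact mul_le_mul_of_nonneg_left (one_sub_pow_le_exp_neg_mul hratio t) (sub_nonneg.2 hS0)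

/-- Exponential-decay guarantee for greedy maximization of a `γ`-weakly
submodular monotone set function:
`F(S*) − F(S_t) ≤ F(S*)·(1 − γ/k)^t ≤ F(S*)·e^{−γt/k}`. -/
theorem greedy_exponential_decay
    {V : Type*} [Fintype V] [DecidableEq V]
    (γ : ℝ) (hγ0 : 0 < γ) (hγ1 : γ ≤ 1)
    (F : Finset V → ℝ) (hF0 : F ∅ = 0)
    (hmono : ∀ S T : Finset V, S ⊆ T → F S ≤ F T)
    (hweak : ∀ S T : Finset V, Disjoint S T →
      ∑ j ∈ T, (F (S ∪ {j}) - F S) ≥ γ * (F (S ∪ T) - F S))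
    (k : ℕ) (hk : 1 ≤ k) (Sstar : Finset V) (hSstar : Sstar.card = k)
    (Sseq : ℕ → Finset V) (hS0 : Sseq 0 = ∅)
    (hgreedy : ∀ t : ℕ, ∃ j : V, Sseq (t + 1) = Sseq t ∪ {j} ∧
      ∀ j' : V, F (Sseq t ∪ {j'}) - F (Sseq t) ≤ F (Sseq t ∪ {j}) - F (Sseq t)) :
    ∀ t : ℕ,
      F Sstar - F (Sseq t) ≤ F Sstar * (1 - γ / k) ^ t ∧
      F Sstar * (1 - γ / k) ^ t ≤ F Sstar * Real.exp (-(γ * t) / k) := by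
  have hstart : F (Sseq 0) ≤ F Sstar := hmono _ _ (hS0 ▸ Finset.empty_subset Sstar)
  simpa only [hS0, hF0, sub_zero] using greedy_exponential_decay_general hweak
    (fun S T ↦ hmono S T) hk hγ0.le (hγ1.trans (Nat.one_le_cast.2 hk)) hSstar.le hgreedy hstart
end

section
/- Let S ⊊ V with |S| < M, let w^S be the minimizer of ℓ among weight vectors supported on S, and let j* ∈ V \ S maximize |(∇ℓ(w^S))_j| over j ∈ V \ S (the orthogonal matching pursuit selection rule). Then for every S* ⊆ V with 1 ≤ |S*| ≤ k and |S ∪ S*| ≤ M, E(S) − E(S ∪ {j*}) ≥ (γ_D/k)·(E(S) − E(S*)), where γ_D = λ/(λ + M·G²). -/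
open scoped BigOperators RealInnerProductSpace

/-- The regularized gradient-matching objective
`ℓ(w) = ‖∑ᵢ wᵢ gᵢ − b‖₂² + λ ∑ᵢ wᵢ²`. -/
noncomputable def ell {V : Type*} [Fintype V] {d : ℕ}
    (g : V → EuclideanSpace ℝ (Fin d)) (b : EuclideanSpace ℝ (Fin d))
    (lam : ℝ) (w : V → ℝ) : ℝ :=
  ‖(∑ i, w i • g i) - b‖ ^ 2 + lam * ∑ i, (w i) ^ 2

/-- `E(S) = inf { ℓ(w) : w supported on S }`. -/
noncomputable def EErr {V : Type*} [Fintype V] {d : ℕ}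
    (g : V → EuclideanSpace ℝ (Fin d)) (b : EuclideanSpace ℝ (Fin d))
    (lam : ℝ) (S : Finset V) : ℝ :=
  sInf {y | ∃ w : V → ℝ, (∀ i ∉ S, w i = 0) ∧ y = ell g b lam w}

/-- The gradient of `ℓ`: `(∇ℓ(u))ⱼ = 2⟨∑ᵢ uᵢ gᵢ − b, gⱼ⟩ + 2λ uⱼ`. -/
noncomputable def gradEll {V : Type*} [Fintype V] {d : ℕ}
    (g : V → EuclideanSpace ℝ (Fin d)) (b : EuclideanSpace ℝ (Fin d))
    (lam : ℝ) (u : V → ℝ) (j : V) : ℝ :=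
  2 * ⟪(∑ i, u i • g i) - b, g j⟫ + 2 * lam * u j

/-!
Along coordinate `j` the objective is a quadratic with leading coefficient `‖gⱼ‖² + λ`, so one
step from `w^S` along `j*` gains at least `(∇ℓ)_{j*}² / (4 (λ + L))` whenever `‖g_{j*}‖² ≤ L`.
Conversely, `ℓ(w^S + v)` is at least the separable quadratic `ℓ(w^S) + ∑ⱼ ((∇ℓ)ⱼ vⱼ + λ vⱼ²)`.
Since `∇ℓ(w^S)` vanishes on `S` by minimality, minimizing each summand shows that passing to `S*`
gains at most `∑_{j ∈ S*} (∇ℓ)ⱼ² / (4 λ) ≤ k (∇ℓ)_{j*}² / (4 λ)`.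
-/

lemma neg_sq_div_le_mul_add_mul_sq {K : Type*} [Field K] [LinearOrder K] [IsStrictOrderedRing K]
    {a : K} (ha : 0 < a) (c t : K) : -(c ^ 2 / (4 * a)) ≤ c * t + a * t ^ 2 := by
  have complete_square : c * t + a * t ^ 2 + c ^ 2 / (4 * a) = (2 * a * t + c) ^ 2 / (4 * a) := by
    field_simp
    ring
  have : 0 ≤ (2 * a * t + c) ^ 2 / (4 * a) := by positivity
  linarith

lemma exists_mul_add_mul_sq_eq_neg_sq_div {K : Type*} [Field K] [NeZero (2 : K)] {a : K}
    (ha : a ≠ 0) (c : K) : ∃ t, c * t + a * t ^ 2 = -(c ^ 2 / (4 * a)) := by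
  have hfour : (4 : K) ≠ 0 := by
    rw [show (4 : K) = 2 ^ 2 by norm_num]
    exact pow_ne_zero 2 two_ne_zero
  refine ⟨-c / (2 * a), ?_⟩
  field_simp
  ring

section Objective

variable {V : Type*} [Fintype V] {d : ℕ} {g : V → EuclideanSpace ℝ (Fin d)}
  {b : EuclideanSpace ℝ (Fin d)} {lam L : ℝ} {S T : Finset V} {u w : V → ℝ} {j : V}

lemma sum_gradEll_mul (g : V → EuclideanSpace ℝ (Fin d)) (b : EuclideanSpace ℝ (Fin d))
    (lam : ℝ) (u v : V → ℝ) :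
    ∑ i, gradEll g b lam u i * v i =
      2 * ⟪(∑ i, u i • g i) - b, ∑ i, v i • g i⟫ + 2 * lam * ∑ i, u i * v i := by
  simp only [gradEll, inner_sum, real_inner_smul_right, Finset.mul_sum, ← Finset.sum_add_distrib]
  exact Finset.sum_congr rfl fun i _ ↦ by ring

lemma ell_add (g : V → EuclideanSpace ℝ (Fin d)) (b : EuclideanSpace ℝ (Fin d))
    (lam : ℝ) (u v : V → ℝ) :
    ell g b lam (u + v) = ell g b lam u + ∑ i, gradEll g b lam u i * v i
      + (‖∑ i, v i • g i‖ ^ 2 + lam * ∑ i, v i ^ 2) := by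
  have residual_add :
      (∑ i, (u + v) i • g i) - b = ((∑ i, u i • g i) - b) + ∑ i, v i • g i := by
    simp only [Pi.add_apply, add_smul, Finset.sum_add_distrib]
    abel
  have sum_sq_add :
      ∑ i, (u + v) i ^ 2 = ∑ i, u i ^ 2 + 2 * ∑ i, u i * v i + ∑ i, v i ^ 2 := by
    simp only [Pi.add_apply, add_sq, Finset.sum_add_distrib, Finset.mul_sum, mul_assoc]
  rw [sum_gradEll_mul, ell, ell, residual_add, sum_sq_add, norm_add_sq_real]
  ring

lemma ell_add_single [DecidableEq V] (g : V → EuclideanSpace ℝ (Fin d))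
    (b : EuclideanSpace ℝ (Fin d)) (lam : ℝ) (u : V → ℝ) (j : V) (t : ℝ) :
    ell g b lam (u + Pi.single j t) =
      ell g b lam u + gradEll g b lam u j * t + (‖g j‖ ^ 2 + lam) * t ^ 2 := by
  simp only [ell_add, Pi.single_apply, mul_ite, mul_zero, ite_smul, zero_smul, ite_pow, ne_eq,
    OfNat.ofNat_ne_zero, not_false_eq_true, zero_pow, Finset.sum_ite_eq', Finset.mem_univ,
    if_true, norm_smul, mul_pow, Real.norm_eq_abs, sq_abs]
  ring

lemma ell_nonneg (hlam : 0 ≤ lam) (w : V → ℝ) : 0 ≤ ell g b lam w := by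
  unfold ell
  positivity

lemma EErr_le_ell (hlam : 0 ≤ lam) (hw : ∀ i ∉ S, w i = 0) :
    EErr g b lam S ≤ ell g b lam w := by
  refine csInf_le ⟨0, ?_⟩ ⟨w, hw, rfl⟩
  rintro _ ⟨w', -, rfl⟩
  exact ell_nonneg hlam w'

lemma le_EErr {c : ℝ} (hc : ∀ w : V → ℝ, (∀ i ∉ S, w i = 0) → c ≤ ell g b lam w) :
    c ≤ EErr g b lam S := by
  refine le_csInf ⟨_, 0, fun _ _ ↦ rfl, rfl⟩ ?_
  rintro _ ⟨w, hw, rfl⟩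
  exact hc w hw

lemma EErr_eq_ell_of_forall_le (hlam : 0 ≤ lam) (hu : ∀ i ∉ S, u i = 0)
    (hmin : ∀ w : V → ℝ, (∀ i ∉ S, w i = 0) → ell g b lam u ≤ ell g b lam w) :
    EErr g b lam S = ell g b lam u :=
  le_antisymm (EErr_le_ell hlam hu) (le_EErr hmin)

lemma EErr_union_singleton_le [DecidableEq V] (hlam : 0 < lam) (hu : ∀ i ∉ S, u i = 0)
    (hL : ‖g j‖ ^ 2 ≤ L) :
    EErr g b lam (S ∪ {j}) ≤ ell g b lam u - gradEll g b lam u j ^ 2 / (4 * (lam + L)) := by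
  have hpos : 0 < lam + L := by linarith [sq_nonneg ‖g j‖]
  obtain ⟨t, ht⟩ := exists_mul_add_mul_sq_eq_neg_sq_div hpos.ne' (gradEll g b lam u j)
  have hsupp : ∀ i ∉ S ∪ {j}, (u + Pi.single j t : V → ℝ) i = 0 := by
    intro i hi
    simp only [Finset.mem_union, Finset.mem_singleton, not_or] at hi
    simp [hu i hi.1, hi.2]
  have hcurv : (‖g j‖ ^ 2 + lam) * t ^ 2 ≤ (lam + L) * t ^ 2 :=
    mul_le_mul_of_nonneg_right (by linarith) (sq_nonneg t)
  calc EErr g b lam (S ∪ {j})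
      ≤ ell g b lam (u + Pi.single j t) := EErr_le_ell hlam.le hsupp
    _ = ell g b lam u + gradEll g b lam u j * t + (‖g j‖ ^ 2 + lam) * t ^ 2 :=
        ell_add_single ..
    _ ≤ ell g b lam u - gradEll g b lam u j ^ 2 / (4 * (lam + L)) := by linarith

lemma gradEll_eq_zero_of_forall_le (hlam : 0 < lam) (hu : ∀ i ∉ S, u i = 0)
    (hmin : ∀ w : V → ℝ, (∀ i ∉ S, w i = 0) → ell g b lam u ≤ ell g b lam w) (hj : j ∈ S) :
    gradEll g b lam u j = 0 := by
  classical
  have hgain := EErr_union_singleton_le (b := b) hlam hu (le_refl (‖g j‖ ^ 2))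
  rw [Finset.union_eq_left.mpr (Finset.singleton_subset_iff.mpr hj),
    EErr_eq_ell_of_forall_le hlam.le hu hmin] at hgain
  by_contra hne
  have : 0 < gradEll g b lam u j ^ 2 / (4 * (lam + ‖g j‖ ^ 2)) := by positivity
  linarith

lemma ell_sub_sum_sq_gradEll_le (hlam : 0 < lam)
    (hzero : ∀ i ∉ T, gradEll g b lam u i * (w i - u i) = 0) :
    ell g b lam u - ∑ i ∈ T, gradEll g b lam u i ^ 2 / (4 * lam) ≤ ell g b lam w := by
  set v := w - u with hv
  have hgrad_sum : ∑ i, gradEll g b lam u i * v i = ∑ i ∈ T, gradEll g b lam u i * v i :=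
    (Finset.sum_subset T.subset_univ fun i _ hi ↦ hzero i hi).symm
  have hsq_sum : lam * ∑ i ∈ T, v i ^ 2 ≤ lam * ∑ i, v i ^ 2 := by
    gcongr
    exact T.subset_univ
  have hcoord : -∑ i ∈ T, gradEll g b lam u i ^ 2 / (4 * lam) ≤
      ∑ i ∈ T, gradEll g b lam u i * v i + lam * ∑ i ∈ T, v i ^ 2 := by
    rw [Finset.mul_sum, ← Finset.sum_add_distrib, ← Finset.sum_neg_distrib]
    exact Finset.sum_le_sum fun i _ ↦ neg_sq_div_le_mul_add_mul_sq hlam _ _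
  have hexpand := ell_add g b lam u v
  rw [hv, add_sub_cancel, ← hv, hgrad_sum] at hexpand
  linarith [sq_nonneg ‖∑ i, v i • g i‖]

lemma EErr_sub_EErr_le_sum_sq_gradEll (hlam : 0 < lam) (hu : ∀ i ∉ S, u i = 0)
    (hmin : ∀ w : V → ℝ, (∀ i ∉ S, w i = 0) → ell g b lam u ≤ ell g b lam w) :
    EErr g b lam S - EErr g b lam T ≤ ∑ i ∈ T, gradEll g b lam u i ^ 2 / (4 * lam) := by
  rw [EErr_eq_ell_of_forall_le hlam.le hu hmin, sub_le_comm]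
  refine le_EErr fun w hw ↦ ell_sub_sum_sq_gradEll_le hlam fun i hiT ↦ ?_
  by_cases hiS : i ∈ S
  · rw [gradEll_eq_zero_of_forall_le hlam hu hmin hiS, zero_mul]
  · rw [hw i hiT, hu i hiS, sub_zero, mul_zero]

lemma EErr_sub_EErr_le_card_mul [DecidableEq V] {c : ℝ} (hlam : 0 < lam)
    (hu : ∀ i ∉ S, u i = 0)
    (hmin : ∀ w : V → ℝ, (∀ i ∉ S, w i = 0) → ell g b lam u ≤ ell g b lam w)
    (hc : ∀ i ∈ T \ S, |gradEll g b lam u i| ≤ |c|) :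
    EErr g b lam S - EErr g b lam T ≤ T.card * (c ^ 2 / (4 * lam)) := by
  have hsq : ∀ i ∈ T, gradEll g b lam u i ^ 2 ≤ c ^ 2 := fun i hiT ↦ by
    by_cases hiS : i ∈ S
    · rw [gradEll_eq_zero_of_forall_le hlam hu hmin hiS, zero_pow two_ne_zero]
      exact sq_nonneg c
    · exact sq_le_sq.mpr (hc i (Finset.mem_sdiff.mpr ⟨hiT, hiS⟩))
  calc EErr g b lam S - EErr g b lam T
      ≤ ∑ i ∈ T, gradEll g b lam u i ^ 2 / (4 * lam) :=
        EErr_sub_EErr_le_sum_sq_gradEll hlam hu hmin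
    _ ≤ T.card • (c ^ 2 / (4 * lam)) :=
        Finset.sum_le_card_nsmul _ _ _ fun i hi ↦
          div_le_div_of_nonneg_right (hsq i hi) (by positivity)
    _ = T.card * (c ^ 2 / (4 * lam)) := nsmul_eq_mul _ _

theorem omp_selection_progress_general [DecidableEq V] (hlam : 0 < lam)
    (hu : ∀ i ∉ S, u i = 0)
    (hmin : ∀ w : V → ℝ, (∀ i ∉ S, w i = 0) → ell g b lam u ≤ ell g b lam w)
    (hL : ‖g j‖ ^ 2 ≤ L)
    (hmax : ∀ i ∈ T \ S, |gradEll g b lam u i| ≤ |gradEll g b lam u j|)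
    {k : ℕ} (hk : 0 < k) (hT : T.card ≤ k) :
    EErr g b lam S - EErr g b lam (S ∪ {j}) ≥
      lam / (lam + L) / k * (EErr g b lam S - EErr g b lam T) := by
  have hL_nonneg : 0 ≤ L := (sq_nonneg _).trans hL
  calc lam / (lam + L) / k * (EErr g b lam S - EErr g b lam T)
      ≤ lam / (lam + L) / k * (T.card * (gradEll g b lam u j ^ 2 / (4 * lam))) := by
        gcongr
        exact EErr_sub_EErr_le_card_mul hlam hu hmin hmax
    _ ≤ lam / (lam + L) / k * (k * (gradEll g b lam u j ^ 2 / (4 * lam))) := by gcongr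
    _ = gradEll g b lam u j ^ 2 / (4 * (lam + L)) := by field_simp
    _ ≤ EErr g b lam S - EErr g b lam (S ∪ {j}) := by
        rw [EErr_eq_ell_of_forall_le hlam.le hu hmin, le_sub_comm]
        exact EErr_union_singleton_le hlam hu hL

end Objective

/-- OMP selection rule guarantee: if `j*` maximizes `|(∇ℓ(w^S))ⱼ|` over
`j ∈ V \ S`, then for every `S*` with `1 ≤ |S*| ≤ k` and `|S ∪ S*| ≤ M`,
`E(S) − E(S∪{j*}) ≥ (γ_D/k)·(E(S) − E(S*))` with `γ_D = λ/(λ + M G²)`. -/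
theorem omp_selection_progress
    {V : Type*} [Fintype V] [DecidableEq V] {d : ℕ} (hd : 1 ≤ d)
    (g : V → EuclideanSpace ℝ (Fin d)) (G : ℝ) (hG : ∀ i, ‖g i‖ ≤ G)
    (b : EuclideanSpace ℝ (Fin d)) (lam : ℝ) (hlam : 0 < lam)
    (M : ℕ) (hM : 0 < M) (k : ℕ)
    (S : Finset V) (hSV : S ⊂ Finset.univ) (hS : S.card < M)
    (wS : V → ℝ) (hwS_supp : ∀ i ∉ S, wS i = 0)
    (hwS_min : ∀ w' : V → ℝ, (∀ i ∉ S, w' i = 0) →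
      ell g b lam wS ≤ ell g b lam w')
    (jstar : V) (hjstar : jstar ∉ S)
    (hjmax : ∀ j : V, j ∉ S →
      |gradEll g b lam wS j| ≤ |gradEll g b lam wS jstar|)
    (Sstar : Finset V) (hSstar1 : 1 ≤ Sstar.card) (hSstark : Sstar.card ≤ k)
    (hcard : (S ∪ Sstar).card ≤ M) :
    EErr g b lam S - EErr g b lam (S ∪ {jstar}) ≥
      ((lam / (lam + M * G ^ 2)) / k) * (EErr g b lam S - EErr g b lam Sstar) := by
  have hL : ‖g jstar‖ ^ 2 ≤ M * G ^ 2 :=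
    (pow_le_pow_left₀ (norm_nonneg _) (hG jstar) 2).trans
      (le_mul_of_one_le_left (sq_nonneg G) (mod_cast hM))
  exact omp_selection_progress_general hlam hwS_supp hwS_min hL
    (fun j hj ↦ hjmax j (Finset.mem_sdiff.mp hj).2) (hSstar1.trans hSstark) hSstark
end
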